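/- Let f : ℝ^d → ℝ be a differentiable convex function with a global minimizer x⋆ and minimum value f⋆ = f(x⋆). Let x : [0,∞) → ℝ^d be differentiable and satisfy the gradient flow x'(t) = -∇f(x(t)) for all t ≥ 0, with x(0) = x₀. Then for every t > 0, f(x(t)) - f⋆ ≤ ‖x₀ - x⋆‖² / (2t). -/

import Mathlib

open RealInnerProductSpace

/-- First-order characterisation of convexity at the gradient. -/
lemma convex_gradient_ineq {d : ℕ} (f : EuclideanSpace ℝ (Fin d) → ℝ)
    (hf : Differentiable ℝ f) (hconv : ConvexOn ℝ Set.univ f)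
    (a b : EuclideanSpace ℝ (Fin d)) : f a + inner ℝ (gradient f a) (b - a) ≤ f b := by
  have hg : ConvexOn ℝ Set.univ (fun s : ℝ => f (AffineMap.lineMap a b s)) := by
    exact hconv.comp_affineMap (AffineMap.lineMap a b : ℝ →ᵃ[ℝ] _)
  have hl : HasDerivAt (fun s : ℝ => (AffineMap.lineMap a b s : EuclideanSpace ℝ (Fin d)))
      (b - a) 0 := AffineMap.hasDerivAt_lineMap
  have hF : HasFDerivAt f (fderiv ℝ f a) (AffineMap.lineMap a b (0 : ℝ)) := by
    simpa using (hf a).hasFDerivAt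
  have hd := hF.comp_hasDerivAt (0 : ℝ) hl
  have key := hg.le_slope_of_hasDerivAt (Set.mem_univ 0) (Set.mem_univ 1) one_pos hd
  have e : inner ℝ (gradient f a) (b - a) = fderiv ℝ f a (b - a) := by
    simp [gradient]
  simp [slope_def_field] at key
  rw [e, map_sub]
  linarith

/-- Convergence rate of the continuous gradient flow for convex objectives:
`f(x(t)) - f⋆ ≤ ‖x₀ - x⋆‖² / (2t)`. -/
theorem gradient_flow_convex_rate {d : ℕ}
    (f : EuclideanSpace ℝ (Fin d) → ℝ)
    (hf : Differentiable ℝ f)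
    (hconv : ConvexOn ℝ Set.univ f)
    (xstar x₀ : EuclideanSpace ℝ (Fin d))
    (hmin : ∀ y, f xstar ≤ f y)
    (x : ℝ → EuclideanSpace ℝ (Fin d))
    (hflow : ∀ t ≥ (0 : ℝ), HasDerivAt x (-gradient f (x t)) t)
    (hx0 : x 0 = x₀) :
    ∀ t > (0 : ℝ), f (x t) - f xstar ≤ ‖x₀ - xstar‖ ^ 2 / (2 * t) := by
  intro t ht
  set E : ℝ → ℝ := fun s => s * (f (x s) - f xstar) + ‖x s - xstar‖ ^ 2 / 2 with hE
  have hder : ∀ s ≥ (0 : ℝ), HasDerivAt E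
      ((f (x s) - f xstar) - s * ‖gradient f (x s)‖ ^ 2
        - inner ℝ (gradient f (x s)) (x s - xstar)) s := by
    intro s hs
    have h1 := (hf (x s)).hasFDerivAt.comp_hasDerivAt s (hflow s hs)
    have e : fderiv ℝ f (x s) (-gradient f (x s)) = - ‖gradient f (x s)‖ ^ 2 := by
      have : fderiv ℝ f (x s) (gradient f (x s))
          = inner ℝ (gradient f (x s)) (gradient f (x s)) := by
        conv_rhs => rw [gradient, InnerProductSpace.toDual_symm_apply]
        rfl
      rw [map_neg, this, real_inner_self_eq_norm_sq]
    rw [e] at h1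
    have h2 := ((hflow s hs).sub_const xstar).norm_sq
    have h3 := ((hasDerivAt_id s).mul (h1.sub_const (f xstar))).add (h2.div_const 2)
    refine HasDerivAt.congr_deriv (f := E) h3 ?_
    rw [inner_neg_right, real_inner_comm]
    simp only [id, Function.comp]
    ring
  have hanti : AntitoneOn E (Set.Ici 0) := by
    apply antitoneOn_of_deriv_nonpos (convex_Ici 0)
    · exact fun s hs => (hder s hs).continuousAt.continuousWithinAt
    · intro s hs
      rw [interior_Ici] at hs
      exact (hder s (le_of_lt hs)).differentiableAt.differentiableWithinAt
    · intro s hs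
      rw [interior_Ici] at hs
      have hs' : (0 : ℝ) < s := hs
      rw [(hder s hs'.le).deriv]
      have h := convex_gradient_ineq f hf hconv (x s) xstar
      rw [← neg_sub (x s) xstar, inner_neg_right] at h
      have : 0 ≤ s * ‖gradient f (x s)‖ ^ 2 := by positivity
      linarith
  have h := hanti (Set.mem_Ici.2 le_rfl) (Set.mem_Ici.2 ht.le) ht.le
  simp only [hE, hx0] at h
  rw [le_div_iff₀ (by positivity)]
  have : 0 ≤ ‖x t - xstar‖ ^ 2 := by positivity
  linarith
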